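/- At every point (r,v) of phase space with A(r,v) ≠ 0, the seven functions E, L_1, L_2, L_3, Θ_1, Θ_2, Θ_3 are closed under the Poisson bracket, with the only nonvanishing brackets among them being {L_i, L_j} = Σ_k ε_{ijk} L_k and {L_i, Θ_j} = Σ_k ε_{ijk} Θ_k; in particular {E, L_i} = 0, {E, Θ_i} = 0, and {Θ_i, Θ_j} = 0 for all i, j ∈ {1,2,3}. (This is the bracket structure of the Lie algebra ℝ ⊕ (so(3) ⋉ ℝ³).) -/

import Mathlib

/-!
With `s = ‖A‖⁻¹`, the components of the LRL direction are `Θ_j = s A_j`, and the derivation property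
of the bracket gives, for every function `F`,
`{F, Θ_j} = s {F, A_j} - s³ A_j ∑ₖ Aₖ {F, Aₖ}` (`pb_lrlDir`).
All brackets with `Θ` thereby reduce to the classical brackets of the LRL vector itself:
`{E, A_j} = 0`, `{L_i, A_j} = ∑ₖ ε_{ijk} Aₖ` and `{A_i, A_j} = -2E ∑ₖ ε_{ijk} Lₖ`, which follow
from explicit gradients (`hasPG_energy`, `hasPG_angMom`, `hasPG_lrl`). The correction term vanishes
for `{L_i, Θ_j}` by antisymmetry of `ε`. For `{Θ_i, Θ_j}` the result is `-2E s²` times the tensor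
`∑ₖ ε_{ijk} Lₖ` projected orthogonally to `A` in both indices; such an antisymmetric tensor only sees
the component of `L` along `A`, which vanishes because `A · L = 0`.
-/

noncomputable section

/-- Physical 3-space. -/
abbrev E3 : Type := EuclideanSpace ℝ (Fin 3)

/-- Build a vector in `E3` from its components. -/
def toE3 (f : Fin 3 → ℝ) : E3 := (EuclideanSpace.equiv (Fin 3) ℝ).symm f

/-- Cross product in `ℝ³`. -/
def cross (a b : E3) : E3 :=
  toE3 ![a 1 * b 2 - a 2 * b 1, a 2 * b 0 - a 0 * b 2, a 0 * b 1 - a 1 * b 0]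

/-- Dot product in `ℝ³`. -/
def dot (a b : E3) : ℝ := ∑ i, a i * b i

/-- Gradient in the `r` variable of a function on phase space. -/
def gradR (F : E3 × E3 → ℝ) (p : E3 × E3) : E3 := gradient (fun x => F (x, p.2)) p.1

/-- Gradient in the `v` variable of a function on phase space. -/
def gradV (F : E3 × E3 → ℝ) (p : E3 × E3) : E3 := gradient (fun y => F (p.1, y)) p.2

/-- Poisson bracket of two functions on phase space. -/
def pb (F G : E3 × E3 → ℝ) (p : E3 × E3) : ℝ :=
  dot (gradR F p) (gradV G p) - dot (gradR G p) (gradV F p)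

/-- Energy `E(r,v) = (1/2)‖v‖² − κ/‖r‖`. -/
def energy (κ : ℝ) (p : E3 × E3) : ℝ := (1/2) * ‖p.2‖^2 - κ / ‖p.1‖

/-- Angular momentum `L(r,v) = r × v`. -/
def angMom (p : E3 × E3) : E3 := cross p.1 p.2

/-- Laplace–Runge–Lenz vector `A(r,v) = v × L − κ r/‖r‖`. -/
def lrl (κ : ℝ) (p : E3 × E3) : E3 := cross p.2 (angMom p) - (κ / ‖p.1‖) • p.1

/-- LRL direction vector `Θ = A/‖A‖`. -/
def lrlDir (κ : ℝ) (p : E3 × E3) : E3 := ‖lrl κ p‖⁻¹ • lrl κ p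

/-- Levi-Civita symbol `ε_{ijk}` on indices in `{0,1,2}`. -/
def eps (i j k : Fin 3) : ℝ :=
  (((j : ℕ) : ℝ) - ((i : ℕ) : ℝ)) * (((k : ℕ) : ℝ) - ((i : ℕ) : ℝ))
    * (((k : ℕ) : ℝ) - ((j : ℕ) : ℝ)) / 2

/-! ### Calculus of partial gradients on phase space -/

/-- `F` has partial gradients `a` in `r` and `b` in `v` at `p`. -/
def HasPG (F : E3 × E3 → ℝ) (a b : E3) (p : E3 × E3) : Prop :=
  HasGradientAt (fun x => F (x, p.2)) a p.1 ∧ HasGradientAt (fun y => F (p.1, y)) b p.2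

theorem HasPG.pb_eq {F G : E3 × E3 → ℝ} {a b c d : E3} {p : E3 × E3}
    (hF : HasPG F a b p) (hG : HasPG G c d p) : pb F G p = dot a d - dot c b := by
  simp only [pb, gradR, gradV, hF.1.gradient, hF.2.gradient, hG.1.gradient, hG.2.gradient]

theorem pb_antisymm (F G : E3 × E3 → ℝ) (p : E3 × E3) : pb F G p = -pb G F p := by
  simp only [pb]; ring

theorem grad_mul {f g : E3 → ℝ} {a b x : E3} (hf : HasGradientAt f a x)
    (hg : HasGradientAt g b x) :
    HasGradientAt (fun y => f y * g y) (f x • b + g x • a) x := by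
  rw [hasGradientAt_iff_hasFDerivAt] at *
  refine (hf.mul hg).congr_fderiv ?_
  simp

theorem grad_add {f g : E3 → ℝ} {a b x : E3} (hf : HasGradientAt f a x)
    (hg : HasGradientAt g b x) : HasGradientAt (fun y => f y + g y) (a + b) x := by
  rw [hasGradientAt_iff_hasFDerivAt] at *
  refine (hf.add hg).congr_fderiv ?_
  simp

theorem grad_sub {f g : E3 → ℝ} {a b x : E3} (hf : HasGradientAt f a x)
    (hg : HasGradientAt g b x) : HasGradientAt (fun y => f y - g y) (a - b) x := by
  rw [hasGradientAt_iff_hasFDerivAt] at *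
  refine (hf.sub hg).congr_fderiv ?_
  simp

theorem grad_comp {φ : ℝ → ℝ} {φ' : ℝ} {f : E3 → ℝ} {a x : E3} (hφ : HasDerivAt φ φ' (f x))
    (hf : HasGradientAt f a x) : HasGradientAt (fun y => φ (f y)) (φ' • a) x := by
  rw [hasGradientAt_iff_hasFDerivAt] at *
  refine (hφ.comp_hasFDerivAt x hf).congr_fderiv ?_
  simp

theorem grad_inner (w x : E3) : HasGradientAt (fun y : E3 => dot y w) w x := by
  rw [hasGradientAt_iff_hasFDerivAt]
  have h : (fun y : E3 => dot y w) = InnerProductSpace.toDual ℝ E3 w := by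
    funext y
    simp [dot, PiLp.inner_apply]
  rw [h]
  exact ContinuousLinearMap.hasFDerivAt _

/-- The standard basis vectors of `E3`. -/
def ebas (i : Fin 3) : E3 := toE3 fun j => if j = i then 1 else 0

@[simp] theorem toE3_apply (f : Fin 3 → ℝ) (i : Fin 3) : toE3 f i = f i := rfl

theorem grad_coord (i : Fin 3) (x : E3) : HasGradientAt (fun y : E3 => y i) (ebas i) x := by
  convert grad_inner (ebas i) x using 2 with y
  simp [dot, ebas]

theorem norm_sq_eq_dot (x : E3) : ‖x‖ ^ 2 = dot x x := by
  simp only [EuclideanSpace.norm_sq_eq, dot, Real.norm_eq_abs, sq_abs]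
  simp only [sq]

theorem norm_inv_eq (x : E3) : ‖x‖⁻¹ = (√(dot x x))⁻¹ := by
  rw [← norm_sq_eq_dot, Real.sqrt_sq (norm_nonneg x)]

theorem grad_dot_self (x : E3) : HasGradientAt (fun y : E3 => dot y y) ((2 : ℝ) • x) x := by
  have h := grad_add (grad_add (grad_mul (grad_coord 0 x) (grad_coord 0 x))
    (grad_mul (grad_coord 1 x) (grad_coord 1 x))) (grad_mul (grad_coord 2 x) (grad_coord 2 x))
  convert h using 1
  · funext y; simp [dot, Fin.sum_univ_three]
  · ext i; fin_cases i <;> simp [ebas] <;> ring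

/-- The derivative of `t ↦ t^(-1/2)`, written at `t = ρ²` as a function of `ρ`. -/
theorem hasDerivAt_inv_sqrt {t ρ : ℝ} (hρ : 0 < ρ) (ht : t = ρ ^ 2) :
    HasDerivAt (fun t : ℝ => (√t)⁻¹) (-(ρ⁻¹ ^ 3 / 2)) t := by
  subst ht
  have h := (Real.hasDerivAt_sqrt (x := ρ ^ 2) (by positivity)).inv
    (by rw [Real.sqrt_sq hρ.le]; exact hρ.ne')
  refine h.congr_deriv ?_
  rw [Real.sqrt_sq hρ.le]
  field_simp

theorem grad_norm_inv {x : E3} (hx : x ≠ 0) :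
    HasGradientAt (fun y : E3 => ‖y‖⁻¹) ((-‖x‖⁻¹ ^ 3) • x) x := by
  have h := grad_comp (f := fun y => dot y y)
    (hasDerivAt_inv_sqrt (norm_pos_iff.2 hx) (norm_sq_eq_dot x).symm) (grad_dot_self x)
  convert h using 1
  · funext y; exact norm_inv_eq y
  · rw [smul_smul]; congr 1; ring

/-! ### Gradients of the energy, the angular momentum and the LRL vector -/

theorem hasPG_energy (κ : ℝ) {r : E3} (hr : r ≠ 0) (v : E3) :
    HasPG (energy κ) ((κ * ‖r‖⁻¹ ^ 3) • r) v (r, v) := by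
  constructor
  · convert grad_sub (hasGradientAt_const r ((1 / 2) * ‖v‖ ^ 2))
      (grad_mul (hasGradientAt_const r κ) (grad_norm_inv hr)) using 1
    · funext x
      simp only [energy, div_eq_mul_inv]
    · ext i
      simp
      ring
  · convert grad_sub (grad_mul (hasGradientAt_const v (1 / 2 : ℝ)) (grad_dot_self v))
      (hasGradientAt_const v (κ / ‖r‖)) using 1
    · funext y
      simp only [energy, norm_sq_eq_dot]
    · ext i
      simp

theorem dot_cross_left (r v w : E3) : dot (cross r v) w = dot r (cross v w) := by
  simp [dot, cross, Fin.sum_univ_three]; ring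

theorem dot_cross_right (r v w : E3) : dot (cross r v) w = dot v (cross w r) := by
  simp [dot, cross, Fin.sum_univ_three]; ring

theorem dot_ebas (x : E3) (i : Fin 3) : dot x (ebas i) = x i := by
  simp [dot, ebas]

theorem hasPG_angMom (i : Fin 3) (r v : E3) :
    HasPG (fun p => angMom p i) (cross v (ebas i)) (cross (ebas i) r) (r, v) := by
  constructor
  · convert grad_inner (cross v (ebas i)) r using 2 with x
    rw [← dot_cross_left, dot_ebas]; rfl
  · convert grad_inner (cross (ebas i) r) v using 2 with y
    rw [← dot_cross_right, dot_ebas]; rfl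

/-- The expansion `v × (r × v) = ‖v‖² r - (r · v) v` inside the LRL vector. -/
theorem lrl_apply (κ : ℝ) (r v : E3) (i : Fin 3) :
    lrl κ (r, v) i = dot v v * r i - dot r v * v i - κ * (‖r‖⁻¹ * r i) := by
  fin_cases i <;> simp [lrl, angMom, cross, dot, Fin.sum_univ_three, div_eq_mul_inv] <;> ring

theorem hasPG_lrl (κ : ℝ) {r : E3} (hr : r ≠ 0) (v : E3) (i : Fin 3) :
    HasPG (fun p => lrl κ p i)
      ((dot v v - κ * ‖r‖⁻¹) • ebas i - v i • v + (κ * ‖r‖⁻¹ ^ 3 * r i) • r)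
      ((2 * r i) • v - v i • r - dot r v • ebas i) (r, v) := by
  constructor
  · convert grad_sub (grad_sub (grad_mul (hasGradientAt_const r (dot v v)) (grad_coord i r))
      (grad_mul (grad_inner v r) (hasGradientAt_const r (v i))))
      (grad_mul (hasGradientAt_const r κ) (grad_mul (grad_norm_inv hr) (grad_coord i r))) using 1
    · funext x; exact lrl_apply κ x v i
    · ext j; simp; ring
  · have h : HasGradientAt (fun y : E3 => dot r y) r v := by
      convert grad_inner r v using 2 with y
      simp [dot, mul_comm]
    convert grad_sub (grad_sub (grad_mul (grad_dot_self v) (hasGradientAt_const v (r i)))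
      (grad_mul h (grad_coord i v)))
      (hasGradientAt_const v (κ * (‖r‖⁻¹ * r i))) using 1
    · funext y; exact lrl_apply κ r y i
    · ext j; simp; ring

/-! ### Brackets with the normalized LRL vector -/

/-- The gradient of a component of the normalization `f / ‖f‖` of a vector field `f`. -/
theorem grad_normalize {f : E3 → E3} {a : Fin 3 → E3} {x : E3} (hx : f x ≠ 0)
    (hf : ∀ k, HasGradientAt (fun y => f y k) (a k) x) (i : Fin 3) :
    HasGradientAt (fun y => (‖f y‖⁻¹ • f y) i)
      (‖f x‖⁻¹ • a i - (‖f x‖⁻¹ ^ 3 * f x i) • ∑ k, f x k • a k) x := by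
  have hd : HasGradientAt (fun y => dot (f y) (f y)) ((2 : ℝ) • ∑ k, f x k • a k) x := by
    have h := grad_add (grad_add (grad_mul (hf 0) (hf 0)) (grad_mul (hf 1) (hf 1)))
      (grad_mul (hf 2) (hf 2))
    convert h using 1
    · funext y; simp [dot, Fin.sum_univ_three]
    · rw [Fin.sum_univ_three]; module
  have h := grad_mul (grad_comp (f := fun y => dot (f y) (f y))
    (hasDerivAt_inv_sqrt (norm_pos_iff.2 hx) (norm_sq_eq_dot (f x)).symm) hd) (hf i)
  convert h using 1
  · funext y
    rw [← norm_inv_eq]; rfl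
  · rw [← norm_inv_eq]; module

theorem hasPG_lrlDir {κ : ℝ} {r v : E3} (hA : lrl κ (r, v) ≠ 0) {a b : Fin 3 → E3}
    (h : ∀ k, HasPG (fun p => lrl κ p k) (a k) (b k) (r, v)) (i : Fin 3) :
    HasPG (fun p => lrlDir κ p i)
      (‖lrl κ (r, v)‖⁻¹ • a i -
        (‖lrl κ (r, v)‖⁻¹ ^ 3 * lrl κ (r, v) i) • ∑ k, lrl κ (r, v) k • a k)
      (‖lrl κ (r, v)‖⁻¹ • b i -
        (‖lrl κ (r, v)‖⁻¹ ^ 3 * lrl κ (r, v) i) • ∑ k, lrl κ (r, v) k • b k) (r, v) :=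
  ⟨grad_normalize (f := fun x => lrl κ (x, v)) hA (fun k => (h k).1) i,
    grad_normalize (f := fun y => lrl κ (r, y)) hA (fun k => (h k).2) i⟩

/-- The derivation property of the bracket applied to `Θ_i = A_i / ‖A‖`. No differentiability of
`F` is needed, since the bracket is bilinear in the two gradients. -/
theorem pb_lrlDir {κ : ℝ} {r v : E3} (hr : r ≠ 0) (hA : lrl κ (r, v) ≠ 0)
    (F : E3 × E3 → ℝ) (i : Fin 3) :
    pb F (fun p => lrlDir κ p i) (r, v) =
      ‖lrl κ (r, v)‖⁻¹ * pb F (fun p => lrl κ p i) (r, v) -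
        ‖lrl κ (r, v)‖⁻¹ ^ 3 * lrl κ (r, v) i *
          ∑ k, lrl κ (r, v) k * pb F (fun p => lrl κ p k) (r, v) := by
  have hT := hasPG_lrlDir hA (hasPG_lrl κ hr v) i
  have h := hasPG_lrl κ hr v
  simp only [pb, gradR, gradV, hT.1.gradient, hT.2.gradient, (h _).1.gradient, (h _).2.gradient]
  simp only [dot, Fin.sum_univ_three, PiLp.sub_apply, PiLp.add_apply, PiLp.smul_apply, smul_eq_mul]
  ring

/-! ### Brackets of the energy, the angular momentum and the LRL vector -/

theorem norm_inv_sq_mul {r : E3} (hr : r ≠ 0) :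
    ‖r‖⁻¹ ^ 2 * (r 0 * r 0 + r 1 * r 1 + r 2 * r 2) = 1 := by
  have h := norm_sq_eq_dot r
  simp only [dot, Fin.sum_univ_three] at h
  rw [← h, ← mul_pow, inv_mul_cancel₀ (norm_ne_zero_iff.2 hr), one_pow]

theorem pb_energy_angMom (κ : ℝ) {r : E3} (hr : r ≠ 0) (v : E3) (i : Fin 3) :
    pb (energy κ) (fun p => angMom p i) (r, v) = 0 := by
  rw [(hasPG_energy κ hr v).pb_eq (hasPG_angMom i r v)]
  fin_cases i <;> simp [dot, cross, ebas, Fin.sum_univ_three] <;> ring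

theorem pb_energy_lrl (κ : ℝ) {r : E3} (hr : r ≠ 0) (v : E3) (i : Fin 3) :
    pb (energy κ) (fun p => lrl κ p i) (r, v) = 0 := by
  rw [(hasPG_energy κ hr v).pb_eq (hasPG_lrl κ hr v i)]
  have h := norm_inv_sq_mul hr
  generalize ‖r‖⁻¹ = u at *
  fin_cases i <;> simp [dot, ebas, Fin.sum_univ_three]
  · linear_combination (-κ * u * v 0) * h
  · linear_combination (-κ * u * v 1) * h
  · linear_combination (-κ * u * v 2) * h

theorem pb_angMom_angMom (r v : E3) (i j : Fin 3) :
    pb (fun p => angMom p i) (fun p => angMom p j) (r, v) = ∑ k, eps i j k * angMom (r, v) k := by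
  rw [(hasPG_angMom i r v).pb_eq (hasPG_angMom j r v)]
  fin_cases i <;> fin_cases j <;>
    simp [dot, cross, ebas, eps, angMom, Fin.sum_univ_three] <;> ring

theorem pb_angMom_lrl (κ : ℝ) {r : E3} (hr : r ≠ 0) (v : E3) (i j : Fin 3) :
    pb (fun p => angMom p i) (fun p => lrl κ p j) (r, v) = ∑ k, eps i j k * lrl κ (r, v) k := by
  rw [(hasPG_angMom i r v).pb_eq (hasPG_lrl κ hr v j)]
  simp only [lrl_apply]
  generalize ‖r‖⁻¹ = u
  fin_cases i <;> fin_cases j <;>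
    simp [dot, cross, ebas, eps, Fin.sum_univ_three] <;> ring

theorem pb_lrl_lrl (κ : ℝ) {r : E3} (hr : r ≠ 0) (v : E3) (i j : Fin 3) :
    pb (fun p => lrl κ p i) (fun p => lrl κ p j) (r, v) =
      -2 * energy κ (r, v) * ∑ k, eps i j k * angMom (r, v) k := by
  rw [(hasPG_lrl κ hr v i).pb_eq (hasPG_lrl κ hr v j)]
  have h := norm_inv_sq_mul hr
  simp only [energy, norm_sq_eq_dot, div_eq_mul_inv]
  generalize ‖r‖⁻¹ = u at *
  have e : ∑ k, eps i j k * angMom (r, v) k = r i * v j - r j * v i := by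
    fin_cases i <;> fin_cases j <;>
      simp [cross, eps, angMom, Fin.sum_univ_three] <;> ring
  rw [e]
  have key : ∀ x y : ℝ, x = y + κ * u * (r j * v i - r i * v j) *
      (u ^ 2 * (r 0 * r 0 + r 1 * r 1 + r 2 * r 2) - 1) → x = y := by
    intro x y hxy
    rw [hxy, h]; ring
  apply key
  clear key h e
  fin_cases i <;> fin_cases j <;> simp [dot, ebas, Fin.sum_univ_three] <;> ring

theorem lrl_dot_angMom (κ : ℝ) (r v : E3) : dot (lrl κ (r, v)) (angMom (r, v)) = 0 := by
  simp only [dot, lrl_apply, Fin.sum_univ_three]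
  simp [angMom, cross]
  ring

/-! ### Brackets of the energy, the angular momentum and the LRL direction -/

/-- The seven functions `E, L_1, L_2, L_3, Θ_1, Θ_2, Θ_3` are closed under the
Poisson bracket, with the only nonvanishing brackets being
`{L_i,L_j} = Σ_k ε_{ijk} L_k` and `{L_i,Θ_j} = Σ_k ε_{ijk} Θ_k`; in particular
`{E,L_i} = 0`, `{E,Θ_i} = 0` and `{Θ_i,Θ_j} = 0`.  This is the bracket structure
of `ℝ ⊕ (so(3) ⋉ ℝ³)`. -/
theorem poisson_algebra_E_L_Theta (κ : ℝ) (hκ : 0 < κ)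
    (r v : E3) (hr : r ≠ 0) (hA : lrl κ (r, v) ≠ 0) :
    (∀ i : Fin 3, pb (energy κ) (fun p => angMom p i) (r, v) = 0) ∧
    (∀ i : Fin 3, pb (energy κ) (fun p => lrlDir κ p i) (r, v) = 0) ∧
    (∀ i j : Fin 3,
      pb (fun p => angMom p i) (fun p => angMom p j) (r, v)
        = ∑ k, eps i j k * angMom (r, v) k) ∧
    (∀ i j : Fin 3,
      pb (fun p => angMom p i) (fun p => lrlDir κ p j) (r, v)
        = ∑ k, eps i j k * lrlDir κ (r, v) k) ∧
    (∀ i j : Fin 3,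
      pb (fun p => lrlDir κ p i) (fun p => lrlDir κ p j) (r, v) = 0) := by
  refine ⟨pb_energy_angMom κ hr v, fun i => ?_, pb_angMom_angMom r v, fun i j => ?_, fun i j => ?_⟩
  · simp [pb_lrlDir hr hA, pb_energy_lrl κ hr v]
  · rw [pb_lrlDir hr hA]
    simp only [pb_angMom_lrl κ hr v, lrlDir, PiLp.smul_apply, smul_eq_mul]
    generalize lrl κ (r, v) = A
    -- the correction term `∑ₖₗ Aₖ ε_{ikl} Aₗ` vanishes by antisymmetry
    have h0 : ∑ k, A k * ∑ l, eps i k l * A l = 0 := by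
      fin_cases i <;> simp [eps, Fin.sum_univ_three] <;> ring
    rw [h0]
    simp only [Fin.sum_univ_three]
    ring
  · have hsq : ‖lrl κ (r, v)‖⁻¹ ^ 2 * (lrl κ (r, v) 0 * lrl κ (r, v) 0
        + lrl κ (r, v) 1 * lrl κ (r, v) 1 + lrl κ (r, v) 2 * lrl κ (r, v) 2) = 1 :=
      norm_inv_sq_mul hA
    have hAL := lrl_dot_angMom κ r v
    have hflip : ∀ k, pb (fun p => lrlDir κ p i) (fun p => lrl κ p k) (r, v) =
        -pb (fun p => lrl κ p k) (fun p => lrlDir κ p i) (r, v) := fun k => pb_antisymm _ _ _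
    rw [pb_lrlDir hr hA]
    simp only [hflip, pb_lrlDir hr hA, pb_lrl_lrl κ hr v]
    simp only [dot, Fin.sum_univ_three] at hAL ⊢
    generalize lrl κ (r, v) = A at *
    generalize angMom (r, v) = L at *
    generalize energy κ (r, v) = E at *
    generalize ‖A‖⁻¹ = s at *
    -- with `M_{ab} = ∑ₖ ε_{abk} Lₖ`, the projected tensor
    -- `M_{ij} - s² A_i ∑ₖ Aₖ M_{kj} - s² A_j ∑ₖ Aₖ M_{ik}` equals
    -- `(1 - s² A·A) M_{ij} + s² (A·L) ∑ₖ ε_{ijk} Aₖ`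
    linear_combination (norm := skip)
      (-2 * E * s ^ 2) * (s ^ 2 * (eps i j 0 * A 0 + eps i j 1 * A 1 + eps i j 2 * A 2) * hAL
        - (eps i j 0 * L 0 + eps i j 1 * L 1 + eps i j 2 * L 2) * hsq)
    clear hflip hAL hsq
    fin_cases i <;> fin_cases j <;> simp [eps] <;> ring
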